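/- Assume the intensity measure density is log-normal: p(a) = (√(2πσ²)·a)^{-1}·exp(-(log a - μ)²/(2σ²)) on (0,∞), with parameters μ ∈ ℝ, σ > 0, and let J(θ) be the Jeffreys prior of the log-normal (probit) fragility model, J(θ)² = |A_{01,02}·A_{21,22} − A_{11,12}²| / (α²β⁶), where for k = 0,1,2, A_{k1,k2}(α,β) = ∫_0^∞ log^k(a/α)·Φ'(γ(a))²/[Φ(γ(a))(1-Φ(γ(a)))]·p(a) da, γ(a) = (log a - log α)/β, Φ'(x) = (2π)^{-1/2}exp(-x²/2). Fix an integer k ≥ 1, data a₁,…,a_k ∈ (0,∞) and z₁,…,z_k ∈ {0,1}, and assume the data are not perfectly separated, i.e. for Lebesgue-almost every α > 0 the vector N(α) with N_i(α) = z_i·1_{a_i<α} + (1-z_i)·1_{a_i>α} is nonzero. Then the Jeffreys posterior is proper: ∫_{(0,∞)²} ℓ_k(z|a,(α,β))·J((α,β)) dα dβ < +∞. -/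

import Mathlib

open MeasureTheory Real Filter Set

/-- The standard Gaussian cumulative distribution function. -/
noncomputable def Phi (x : ℝ) : ℝ :=
  (Real.sqrt (2 * Real.pi))⁻¹ * ∫ t in Set.Iic x, Real.exp (-t ^ 2 / 2)

/-- The standard Gaussian density `Φ'(x) = (2π)^{-1/2} exp(-x²/2)`. -/
noncomputable def Phi' (x : ℝ) : ℝ :=
  (Real.sqrt (2 * Real.pi))⁻¹ * Real.exp (-x ^ 2 / 2)

/-- The log-normal intensity measure density
`p(a) = (√(2πσ²)·a)⁻¹ exp(-(log a - μ)²/(2σ²))`. -/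
noncomputable def pLN (μ σ a : ℝ) : ℝ :=
  (Real.sqrt (2 * Real.pi * σ ^ 2) * a)⁻¹ * Real.exp (-(Real.log a - μ) ^ 2 / (2 * σ ^ 2))

/-- `A_{k1,k2}(α,β) = ∫₀^∞ log^k(a/α)·Φ'(γ(a))²/[Φ(γ(a))(1-Φ(γ(a)))]·p(a) da`
with `γ(a) = (log a - log α)/β`. -/
noncomputable def A (μ σ : ℝ) (k : ℕ) (α β : ℝ) : ℝ :=
  ∫ a in Set.Ioi (0 : ℝ),
    Real.log (a / α) ^ k *
      (Phi' ((Real.log a - Real.log α) / β) ^ 2 /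
        (Phi ((Real.log a - Real.log α) / β) *
          (1 - Phi ((Real.log a - Real.log α) / β)))) * pLN μ σ a

/-- The Jeffreys prior, `J(θ) = √(|A₀₁,₀₂·A₂₁,₂₂ − A₁₁,₁₂²| / (α²β⁶))`. -/
noncomputable def Jeff (μ σ α β : ℝ) : ℝ :=
  Real.sqrt (|A μ σ 0 α β * A μ σ 2 α β - A μ σ 1 α β ^ 2| / (α ^ 2 * β ^ 6))

/-- The likelihood of the log-normal (probit) fragility model. -/
noncomputable def lik (k : ℕ) (a : Fin k → ℝ) (z : Fin k → ℕ) (α β : ℝ) : ℝ :=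
  ∏ i, Phi (Real.log (a i / α) / β) ^ (z i) *
    (1 - Phi (Real.log (a i / α) / β)) ^ (1 - z i)

lemma c_pos : 0 < (Real.sqrt (2 * Real.pi))⁻¹ := by positivity

lemma gInt (b : ℝ) (hb : 0 < b) : Integrable (fun t : ℝ => Real.exp (-t ^ 2 / b)) := by
  have := integrable_exp_neg_mul_sq (b := 1 / b) (by positivity)
  refine this.congr (Eventually.of_forall fun t => ?_)
  simp only; congr 1; ring

lemma gVal (b : ℝ) : ∫ t : ℝ, Real.exp (-t ^ 2 / b) = Real.sqrt (b * π) := by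
  have := integral_gaussian (1 / b)
  rw [div_div_eq_mul_div, div_one, mul_comm π b] at this
  rw [← this]
  congr 1; ext t; congr 1; ring

lemma one_sub_Phi (x : ℝ) :
    1 - Phi x = (Real.sqrt (2 * Real.pi))⁻¹ * ∫ t in Set.Ioi x, Real.exp (-t ^ 2 / 2) := by
  have h := integral_add_compl (measurableSet_Iic (a := x)) (gInt 2 (by norm_num))
  rw [gVal, compl_Iic] at h
  unfold Phi
  have hs : (Real.sqrt (2 * Real.pi)) ≠ 0 := by positivity
  have h1 : (Real.sqrt (2 * Real.pi))⁻¹ * Real.sqrt (2 * Real.pi) = 1 := inv_mul_cancel₀ hs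
  have h2 := congrArg (fun y => (Real.sqrt (2 * Real.pi))⁻¹ * y) h
  rw [h1, mul_add] at h2
  linarith

lemma Phi_neg (x : ℝ) : Phi (-x) = 1 - Phi x := by
  rw [one_sub_Phi]
  unfold Phi
  congr 1
  have := integral_comp_neg_Iic (-x) (fun t : ℝ => Real.exp (-t ^ 2 / 2))
  simpa using this

lemma Phi_mono : Monotone Phi := by
  intro x y hxy
  unfold Phi
  refine mul_le_mul_of_nonneg_left ?_ c_pos.le
  exact setIntegral_mono_set (gInt 2 (by norm_num)).integrableOn
    (Eventually.of_forall fun t => (Real.exp_pos _).le) (Iic_subset_Iic.2 hxy).eventuallyLE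

lemma Phi_nonneg (x : ℝ) : 0 ≤ Phi x := by
  unfold Phi
  exact mul_nonneg c_pos.le (integral_nonneg fun t => (Real.exp_pos _).le)

lemma Phi_le_one (x : ℝ) : Phi x ≤ 1 := by
  have := Phi_nonneg (-x)
  rw [Phi_neg] at this
  linarith

lemma Phi_half {x : ℝ} (hx : 0 ≤ x) : 1 / 2 ≤ Phi x := by
  have := Phi_neg 0
  have h2 := Phi_mono hx
  rw [neg_zero] at this
  linarith

lemma Phi_lower {x : ℝ} (hx : 0 ≤ x) :
    (Real.sqrt (2 * Real.pi))⁻¹ * Real.exp (-(x + 1) ^ 2 / 2) ≤ 1 - Phi x := by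
  rw [one_sub_Phi]
  refine mul_le_mul_of_nonneg_left ?_ c_pos.le
  calc Real.exp (-(x + 1) ^ 2 / 2) = ∫ t in Set.Ioc x (x + 1), Real.exp (-(x + 1) ^ 2 / 2) := by
        simp
    _ ≤ ∫ t in Set.Ioc x (x + 1), Real.exp (-t ^ 2 / 2) := by
        refine setIntegral_mono_on ?_ (gInt 2 (by norm_num)).integrableOn measurableSet_Ioc ?_
        · exact integrableOn_const (by simp)
        · intro t ht
          apply Real.exp_le_exp.2
          have := ht.1
          have := ht.2
          nlinarith
    _ ≤ _ := setIntegral_mono_set (gInt 2 (by norm_num)).integrableOn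
        (Eventually.of_forall fun t => (Real.exp_pos _).le) Ioc_subset_Ioi_self.eventuallyLE

lemma Phi_upper {x : ℝ} (hx : 0 ≤ x) :
    1 - Phi x ≤ (Real.sqrt (2 * Real.pi))⁻¹ * Real.sqrt (4 * π) * Real.exp (-x ^ 2 / 4) := by
  rw [one_sub_Phi, mul_assoc]
  refine mul_le_mul_of_nonneg_left ?_ c_pos.le
  rw [← gVal 4, ← integral_mul_const]
  calc ∫ t in Set.Ioi x, Real.exp (-t ^ 2 / 2)
      ≤ ∫ t in Set.Ioi x, Real.exp (-t ^ 2 / 4) * Real.exp (-x ^ 2 / 4) := by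
        refine setIntegral_mono_on (gInt 2 (by norm_num)).integrableOn
          ((gInt 4 (by norm_num)).mul_const _).integrableOn measurableSet_Ioi ?_
        intro t ht
        rw [← Real.exp_add]
        apply Real.exp_le_exp.2
        have : x < t := ht
        nlinarith
    _ ≤ _ := by
        exact setIntegral_le_integral ((gInt 4 (by norm_num)).mul_const _)
          (Eventually.of_forall fun t => by positivity)

lemma V_lower (x : ℝ) :
    (Real.sqrt (2 * Real.pi))⁻¹ / 2 * Real.exp (-(|x| + 1) ^ 2 / 2) ≤ Phi x * (1 - Phi x) := by
  have key : ∀ y : ℝ, 0 ≤ y → (Real.sqrt (2 * Real.pi))⁻¹ / 2 * Real.exp (-(y + 1) ^ 2 / 2)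
      ≤ Phi y * (1 - Phi y) := by
    intro y hy
    have h1 := Phi_half hy
    have h2 := Phi_lower hy
    have h3 : 0 ≤ 1 - Phi y := by linarith [Phi_le_one y]
    nlinarith
  rcases le_total 0 x with h | h
  · rw [abs_of_nonneg h]; exact key x h
  · rw [abs_of_nonpos h]
    have := key (-x) (by linarith)
    rw [Phi_neg] at this
    linarith

lemma V_upper : ∃ K : ℝ, 0 < K ∧ ∀ x : ℝ, Phi x * (1 - Phi x) ≤ K * Real.exp (-x ^ 2 / 4) := by
  refine ⟨(Real.sqrt (2 * Real.pi))⁻¹ * Real.sqrt (4 * π), by positivity, ?_⟩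
  have key : ∀ y : ℝ, 0 ≤ y → Phi y * (1 - Phi y) ≤
      (Real.sqrt (2 * Real.pi))⁻¹ * Real.sqrt (4 * π) * Real.exp (-y ^ 2 / 4) := by
    intro y hy
    have h2 := Phi_upper hy
    have h3 : 0 ≤ 1 - Phi y := by linarith [Phi_le_one y]
    have h4 := Phi_le_one y
    nlinarith
  intro x
  rcases le_total 0 x with h | h
  · exact key x h
  · have := key (-x) (by linarith)
    rw [Phi_neg] at this
    rw [neg_sq] at this
    linarith

/-- The Fisher weight. -/
noncomputable def hW (x : ℝ) : ℝ := Phi' x ^ 2 / (Phi x * (1 - Phi x))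

lemma V_pos (x : ℝ) : 0 < Phi x * (1 - Phi x) :=
  lt_of_lt_of_le (by positivity) (V_lower x)

lemma hW_nonneg (x : ℝ) : 0 ≤ hW x := div_nonneg (sq_nonneg _) (V_pos x).le

lemma hW_upper : ∃ K : ℝ, 0 < K ∧ ∀ x : ℝ, hW x ≤ K * Real.exp (-x ^ 2 / 4) := by
  refine ⟨(Real.sqrt (2 * Real.pi))⁻¹ * 2 * Real.exp (3 / 2), by positivity, fun x => ?_⟩
  unfold hW
  rw [div_le_iff₀ (V_pos x)]
  set c := (Real.sqrt (2 * Real.pi))⁻¹ with hc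
  have hcp : 0 < c := c_pos
  calc Phi' x ^ 2 = c ^ 2 * Real.exp (- x ^ 2) := by
        unfold Phi'; rw [mul_pow, ← hc, ← Real.exp_nat_mul]; congr 2; push_cast; ring
    _ ≤ c ^ 2 * Real.exp (3 / 2 + -x ^ 2 / 4 + -(|x| + 1) ^ 2 / 2) := by
        gcongr
        have := sq_abs x
        nlinarith [sq_nonneg (|x| / 2 - 1)]
    _ = c * 2 * Real.exp (3 / 2) * Real.exp (-x ^ 2 / 4) *
        (c / 2 * Real.exp (-(|x| + 1) ^ 2 / 2)) := by
        rw [Real.exp_add, Real.exp_add]; ring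
    _ ≤ _ := by
        exact mul_le_mul_of_nonneg_left (V_lower x) (by positivity)

lemma hW_meas : Measurable hW := by
  have : Measurable Phi := Phi_mono.measurable
  unfold hW
  have h2 : Measurable Phi' := by unfold Phi'; fun_prop
  fun_prop

/-- Gaussian density of log-intensity. -/
noncomputable def qG (μ σ u : ℝ) : ℝ :=
  (Real.sqrt (2 * Real.pi * σ ^ 2))⁻¹ * Real.exp (-(u - μ) ^ 2 / (2 * σ ^ 2))

lemma exp_image : Real.exp '' univ = Ioi 0 := by
  rw [image_univ, Real.range_exp]

lemma A_eq (μ σ : ℝ) (k : ℕ) {α β : ℝ} (hα : 0 < α) :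
    A μ σ k α β = ∫ u : ℝ, (u - Real.log α) ^ k * hW ((u - Real.log α) / β) * qG μ σ u := by
  unfold A
  rw [← exp_image, integral_image_eq_integral_abs_deriv_smul MeasurableSet.univ
    (fun x _ => (Real.hasDerivAt_exp x).hasDerivWithinAt) Real.exp_injective.injOn, setIntegral_univ]
  congr 1; ext u
  rw [Real.log_div (Real.exp_pos u).ne' hα.ne', Real.log_exp, abs_of_pos (Real.exp_pos u)]
  unfold hW pLN qG
  rw [Real.log_exp, smul_eq_mul, mul_inv]
  have : Real.exp u * (Real.exp u)⁻¹ = 1 := mul_inv_cancel₀ (Real.exp_pos u).ne'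
  linear_combination ((u - Real.log α) ^ k * (Phi' ((u - Real.log α) / β) ^ 2 /
        (Phi ((u - Real.log α) / β) * (1 - Phi ((u - Real.log α) / β)))) *
        (Real.sqrt (2 * Real.pi * σ ^ 2))⁻¹ * Real.exp (-(u - μ) ^ 2 / (2 * σ ^ 2))) * this

lemma mom_int (k : ℕ) (b : ℝ) (hb : 0 < b) :
    Integrable (fun t : ℝ => |t| ^ k * Real.exp (-t ^ 2 / b)) := by
  have h := integrable_rpow_mul_exp_neg_mul_sq (b := 1 / b) (by positivity) (s := k)
    (by have : (0:ℝ) ≤ k := by positivity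
        linarith)
  refine h.norm.congr (Eventually.of_forall fun t => ?_)
  simp only [Real.rpow_natCast, norm_mul, norm_pow, Real.norm_eq_abs, Real.abs_exp]
  congr 2; ring

lemma qG_nonneg (μ σ u : ℝ) : 0 ≤ qG μ σ u := by unfold qG; positivity

lemma qG_le (μ σ u : ℝ) : qG μ σ u ≤ (Real.sqrt (2 * Real.pi * σ ^ 2))⁻¹ := by
  unfold qG
  refine mul_le_of_le_one_right (by positivity) (Real.exp_le_one_iff.2 ?_)
  rw [neg_div]
  have : 0 ≤ (u - μ) ^ 2 / (2 * σ ^ 2) := by positivity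
  linarith

lemma A_small (μ σ : ℝ) (k : ℕ) : ∃ C : ℝ, 0 ≤ C ∧ ∀ α β : ℝ, 0 < α → 0 < β →
    |A μ σ k α β| ≤ C * β ^ (k + 1) := by
  obtain ⟨K, hK, hKb⟩ := hW_upper
  set Q := (Real.sqrt (2 * Real.pi * σ ^ 2))⁻¹ with hQ
  have hQ0 : 0 ≤ Q := by positivity
  set M := ∫ t : ℝ, |t| ^ k * Real.exp (-t ^ 2 / 4) with hM
  refine ⟨K * Q * M, mul_nonneg (by positivity) (integral_nonneg fun t => by positivity), ?_⟩
  intro α β hα hβ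
  set l := Real.log α with hl
  let f : ℝ → ℝ := fun t => K * Q * β ^ k * (|t| ^ k * Real.exp (-t ^ 2 / 4))
  have hf : Integrable f := (mom_int k 4 (by norm_num)).const_mul _
  have hfi : Integrable (fun u => f ((u - l) / β)) :=
    (hf.comp_div hβ.ne').comp_sub_right l
  rw [A_eq μ σ k hα, ← Real.norm_eq_abs]
  calc _ ≤ ∫ u, f ((u - l) / β) := by
        refine norm_integral_le_of_norm_le hfi (Eventually.of_forall fun u => ?_)
        have h1 := hKb ((u - l) / β)
        have h2 := hW_nonneg ((u - l) / β)
        rw [norm_mul, norm_mul, norm_pow, Real.norm_eq_abs, Real.norm_of_nonneg h2,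
          Real.norm_of_nonneg (qG_nonneg _ _ _)]
        calc _ ≤ |u - l| ^ k * (K * Real.exp (-((u - l) / β) ^ 2 / 4)) * Q := by
              have h3 := qG_nonneg μ σ u
              have h4 : qG μ σ u ≤ Q := qG_le _ _ _
              gcongr
          _ = _ := by
              simp only [f]
              rw [abs_div, abs_of_pos hβ, div_pow |u - l|]
              have : β ^ k ≠ 0 := by positivity
              field_simp
    _ = ∫ u, f (u / β) := integral_sub_right_eq_self (fun u => f (u / β)) l
    _ = β * ∫ u, f u := by
        rw [Measure.integral_comp_div f β, abs_of_pos hβ, smul_eq_mul]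
    _ = _ := by
        simp only [f]
        rw [integral_const_mul]
        ring

/-- Centred moments. -/
noncomputable def Bc (μ σ : ℝ) (k : ℕ) (l β : ℝ) : ℝ :=
  ∫ u : ℝ, (u - μ) ^ k * hW ((u - l) / β) * qG μ σ u

lemma Bc_bound (μ σ : ℝ) (hσ : 0 < σ) (k : ℕ) : ∃ C : ℝ, 0 ≤ C ∧ ∀ l β : ℝ,
    Integrable (fun u : ℝ => (u - μ) ^ k * hW ((u - l) / β) * qG μ σ u) ∧
    |Bc μ σ k l β| ≤ C := by
  obtain ⟨K, hK, hKb⟩ := hW_upper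
  set Q := (Real.sqrt (2 * Real.pi * σ ^ 2))⁻¹ with hQ
  have hQ0 : 0 ≤ Q := by positivity
  let f : ℝ → ℝ := fun t => K * Q * (|t| ^ k * Real.exp (-t ^ 2 / (2 * σ ^ 2)))
  have hf : Integrable f := (mom_int k (2 * σ ^ 2) (by positivity)).const_mul _
  have hfi : Integrable (fun u => f (u - μ)) := hf.comp_sub_right μ
  refine ⟨∫ u, f (u - μ), integral_nonneg fun u => by positivity, fun l β => ?_⟩
  have hb : ∀ u, ‖(u - μ) ^ k * hW ((u - l) / β) * qG μ σ u‖ ≤ f (u - μ) := by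
    intro u
    have h1 := hKb ((u - l) / β)
    have h2 := hW_nonneg ((u - l) / β)
    have h3 : Real.exp (-((u - l) / β) ^ 2 / 4) ≤ 1 := Real.exp_le_one_iff.2 (by
      have := sq_nonneg ((u - l) / β)
      linarith)
    have h4 : hW ((u - l) / β) ≤ K := by nlinarith
    rw [norm_mul, norm_mul, norm_pow, Real.norm_eq_abs, Real.norm_of_nonneg h2,
          Real.norm_of_nonneg (qG_nonneg _ _ _)]
    calc _ ≤ |u - μ| ^ k * K * qG μ σ u := by
          have := qG_nonneg μ σ u
          gcongr
      _ = _ := by simp only [f, qG]; ring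
  refine ⟨?_, norm_integral_le_of_norm_le hfi (Eventually.of_forall hb)⟩
  refine hfi.mono' ?_ (Eventually.of_forall hb)
  have := hW_meas
  have h2 : Measurable (qG μ σ) := by unfold qG; fun_prop
  exact Measurable.aestronglyMeasurable (by fun_prop)

lemma det_eq (μ σ : ℝ) (hσ : 0 < σ) {α β : ℝ} (hα : 0 < α) :
    A μ σ 0 α β * A μ σ 2 α β - A μ σ 1 α β ^ 2 =
    Bc μ σ 0 (Real.log α) β * Bc μ σ 2 (Real.log α) β - Bc μ σ 1 (Real.log α) β ^ 2 := by
  set l := Real.log α with hl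
  have i0 := (Bc_bound μ σ hσ 0).choose_spec.2 l β |>.1
  have i1 := (Bc_bound μ σ hσ 1).choose_spec.2 l β |>.1
  have i2 := (Bc_bound μ σ hσ 2).choose_spec.2 l β |>.1
  have e0 : A μ σ 0 α β = Bc μ σ 0 l β := by
    rw [A_eq μ σ 0 hα]; unfold Bc; simp only [pow_zero, ← hl]
  have e1 : A μ σ 1 α β = Bc μ σ 1 l β + (μ - l) * Bc μ σ 0 l β := by
    rw [A_eq μ σ 1 hα, ← hl]; unfold Bc
    rw [← integral_const_mul, ← integral_add i1 (i0.const_mul _)]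
    congr 1; ext u; ring
  have e2 : A μ σ 2 α β = Bc μ σ 2 l β + (2 * (μ - l) * Bc μ σ 1 l β
      + (μ - l) ^ 2 * Bc μ σ 0 l β) := by
    rw [A_eq μ σ 2 hα, ← hl]; unfold Bc
    rw [← integral_const_mul, ← integral_const_mul,
      ← integral_add (i1.const_mul _) (i0.const_mul _),
      ← integral_add i2 (by exact (i1.const_mul _).add (i0.const_mul _))]
    congr 1; ext u; ring
  rw [e0, e1, e2]; ring

lemma det_bound (μ σ : ℝ) (hσ : 0 < σ) : ∃ C : ℝ, 0 ≤ C ∧ ∀ α β : ℝ, 0 < α → 0 < β →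
    |A μ σ 0 α β * A μ σ 2 α β - A μ σ 1 α β ^ 2| ≤ C * β ^ 4 ∧
    |A μ σ 0 α β * A μ σ 2 α β - A μ σ 1 α β ^ 2| ≤ C := by
  obtain ⟨C0, p0, h0⟩ := A_small μ σ 0
  obtain ⟨C1, p1, h1⟩ := A_small μ σ 1
  obtain ⟨C2, p2, h2⟩ := A_small μ σ 2
  obtain ⟨D0, q0, g0⟩ := Bc_bound μ σ hσ 0
  obtain ⟨D1, q1, g1⟩ := Bc_bound μ σ hσ 1
  obtain ⟨D2, q2, g2⟩ := Bc_bound μ σ hσ 2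
  have key : ∀ x y w X Y W : ℝ, |x| ≤ X → |y| ≤ Y → |w| ≤ W → |x * y - w ^ 2| ≤ X * Y + W ^ 2 := by
    intro x y w X Y W hx hy hw
    calc _ ≤ |x * y| + |w ^ 2| := abs_sub _ _
      _ = |x| * |y| + |w| ^ 2 := by rw [abs_mul, abs_pow]
      _ ≤ _ := by
        have := abs_nonneg x
        gcongr
        linarith
  refine ⟨(C0 * C2 + C1 ^ 2) + (D0 * D2 + D1 ^ 2), by positivity, fun α β hα hβ => ⟨?_, ?_⟩⟩
  · have := key _ _ _ _ _ _ (h0 α β hα hβ) (h2 α β hα hβ) (h1 α β hα hβ)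
    refine this.trans ?_
    have : 0 ≤ (D0 * D2 + D1 ^ 2) * β ^ 4 := by positivity
    ring_nf at this ⊢
    linarith
  · rw [det_eq μ σ hσ hα]
    have := key _ _ _ _ _ _ (g0 (Real.log α) β).2 (g2 (Real.log α) β).2 (g1 (Real.log α) β).2
    refine this.trans ?_
    have : 0 ≤ C0 * C2 + C1 ^ 2 := by positivity
    linarith

/-- The radial weight. -/
noncomputable def gB (β : ℝ) : ℝ := if β ≤ 1 then β⁻¹ else (β ^ 3)⁻¹

lemma Jeff_bound (μ σ : ℝ) (hσ : 0 < σ) : ∃ C : ℝ, 0 ≤ C ∧ ∀ α β : ℝ, 0 < α → 0 < β →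
    Jeff μ σ α β ≤ C * gB β * α⁻¹ := by
  obtain ⟨C, hC, h⟩ := det_bound μ σ hσ
  refine ⟨Real.sqrt C, Real.sqrt_nonneg _, fun α β hα hβ => ?_⟩
  obtain ⟨h1, h2⟩ := h α β hα hβ
  unfold Jeff gB
  apply Real.sqrt_le_iff.2
  split_ifs with hb
  · refine ⟨by positivity, ?_⟩
    rw [div_le_iff₀ (by positivity), mul_pow, mul_pow, Real.sq_sqrt hC]
    refine h1.trans (le_of_eq ?_)
    field_simp
  · refine ⟨by positivity, ?_⟩
    rw [div_le_iff₀ (by positivity), mul_pow, mul_pow, Real.sq_sqrt hC]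
    refine h2.trans (le_of_eq ?_)
    field_simp

lemma pair_exists (k : ℕ) (a : Fin k → ℝ) (ha : ∀ i, 0 < a i)
    (z : Fin k → ℕ) (hz : ∀ i, z i = 0 ∨ z i = 1)
    (hnosep : ∀ᵐ α ∂(volume.restrict (Set.Ioi (0 : ℝ))),
      ∃ i, (if a i < α then z i else if α < a i then 1 - z i else 0) ≠ 0) :
    ∃ i0 i1, z i0 = 0 ∧ z i1 = 1 ∧ a i1 ≤ a i0 := by
  by_contra! hcon
  let lo : Finset ℝ := insert 0 ((Finset.univ.filter fun i => z i = 0).image a)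
  let hi : Finset ℝ := (Finset.univ.filter fun i => z i = 1).image a
  have hlt : ∀ x ∈ lo, ∀ y ∈ hi, x < y := by
    intro x hx y hy
    simp only [lo, hi, Finset.mem_insert, Finset.mem_image, Finset.mem_filter,
      Finset.mem_univ, true_and] at hx hy
    obtain ⟨j, hj, rfl⟩ := hy
    rcases hx with rfl | ⟨i, hi, rfl⟩
    · exact ha j
    · exact hcon i j hi hj
  obtain ⟨m, hm1, hm2⟩ := Order.exists_between_finsets lo hi hlt
  obtain ⟨n, hn1, hn2⟩ := Order.exists_between_finsets (insert m lo) hi (by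
    intro x hx y hy
    rcases Finset.mem_insert.1 hx with rfl | hx
    · exact hm2 y hy
    · exact hlt x hx y hy)
  have hmn : m < n := hn1 m (Finset.mem_insert_self _ _)
  have hm0 : 0 < m := hm1 0 (Finset.mem_insert_self _ _)
  have hae := ae_restrict_of_ae_restrict_of_subset (s := Ioo m n)
    (fun x hx => hm0.trans hx.1 : Ioo m n ⊆ Ioi (0:ℝ)) hnosep
  have hne : (ae (volume.restrict (Ioo m n))).NeBot := by
    rw [ae_neBot, Ne, Measure.restrict_eq_zero, Real.volume_Ioo]
    simpa using hmn
  obtain ⟨α, ⟨i, hi'⟩, hα⟩ := (hae.and (ae_restrict_mem measurableSet_Ioo)).exists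
  rcases hz i with h0 | h1
  · have : a i < m := hm1 _ (Finset.mem_insert_of_mem (Finset.mem_image_of_mem _ (by simp [h0])))
    have := hα.1
    rw [if_pos (by linarith)] at hi'
    exact hi' h0
  · have : n < a i := hn2 _ (Finset.mem_image_of_mem _ (by simp [h1]))
    have := hα.2
    rw [if_neg (by linarith), if_pos (by linarith)] at hi'
    omega

lemma lik_bound (k : ℕ) (a : Fin k → ℝ) (ha : ∀ i, 0 < a i) (z : Fin k → ℕ) (i0 i1 : Fin k)
    (h0 : z i0 = 0) (h1 : z i1 = 1) (hle : a i1 ≤ a i0) {α β : ℝ} (hα : 0 < α) (hβ : 0 < β) :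
    0 ≤ lik k a z α β ∧ lik k a z α β ≤ Phi (Real.log (a i0 / α) / β) *
      (1 - Phi (Real.log (a i0 / α) / β)) := by
  set F : Fin k → ℝ := fun i => Phi (Real.log (a i / α) / β) ^ (z i) *
    (1 - Phi (Real.log (a i / α) / β)) ^ (1 - z i) with hF
  have hl : lik k a z α β = ∏ i, F i := rfl
  have F0 : ∀ i, 0 ≤ F i := fun i => mul_nonneg (pow_nonneg (Phi_nonneg _) _)
    (pow_nonneg (by linarith [Phi_le_one (Real.log (a i / α) / β)]) _)
  have F1 : ∀ i, F i ≤ 1 := fun i => mul_le_one₀ (pow_le_one₀ (Phi_nonneg _) (Phi_le_one _))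
    (pow_nonneg (by linarith [Phi_le_one (Real.log (a i / α) / β)]) _)
    (pow_le_one₀ (by linarith [Phi_le_one (Real.log (a i / α) / β)])
      (by linarith [Phi_nonneg (Real.log (a i / α) / β)]))
  have hne : i1 ≠ i0 := by rintro rfl; omega
  rw [hl]
  refine ⟨Finset.prod_nonneg fun i _ => F0 i, ?_⟩
  rw [← Finset.mul_prod_erase _ _ (Finset.mem_univ i0),
    ← Finset.mul_prod_erase _ _ (Finset.mem_erase.2 ⟨hne, Finset.mem_univ i1⟩)]
  have e0 : F i0 = 1 - Phi (Real.log (a i0 / α) / β) := by simp [hF, h0]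
  have e1 : F i1 = Phi (Real.log (a i1 / α) / β) := by simp [hF, h1]
  have hm : F i1 ≤ Phi (Real.log (a i0 / α) / β) := by
    rw [e1]
    apply Phi_mono
    have := ha i1
    gcongr
  have hp : ∏ x ∈ (Finset.univ.erase i0).erase i1, F x ≤ 1 :=
    Finset.prod_le_one (fun i _ => F0 i) (fun i _ => F1 i)
  rw [mul_comm, ← e0]
  refine mul_le_mul_of_nonneg_right ?_ (F0 i0)
  exact (mul_le_of_le_one_right (F0 i1) hp).trans hm

lemma inner_int (c : ℝ) {β : ℝ} (hβ : 0 < β) :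
    ∫⁻ α in Ioi (0:ℝ), ENNReal.ofReal (Real.exp (-((c - Real.log α) / β) ^ 2 / 4) * α⁻¹) =
      ENNReal.ofReal (β * Real.sqrt (4 * π)) := by
  rw [← exp_image, lintegral_image_eq_lintegral_abs_deriv_mul MeasurableSet.univ
    (fun x _ => (Real.hasDerivAt_exp x).hasDerivWithinAt) Real.exp_injective.injOn,
    Measure.restrict_univ]
  have hi : Integrable (fun u : ℝ => Real.exp (-((c - u) / β) ^ 2 / 4)) :=
    ((gInt 4 (by norm_num)).comp_div hβ.ne').comp_sub_left c
  have hv : ∫ u : ℝ, Real.exp (-((c - u) / β) ^ 2 / 4) = β * Real.sqrt (4 * π) := by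
    rw [integral_sub_left_eq_self (fun u : ℝ => Real.exp (-(u / β) ^ 2 / 4)) volume c,
      Measure.integral_comp_div (fun u : ℝ => Real.exp (-u ^ 2 / 4)), gVal, abs_of_pos hβ,
      smul_eq_mul]
  rw [← hv, ofReal_integral_eq_lintegral_ofReal hi (Eventually.of_forall fun u => (Real.exp_pos _).le)]
  congr 1; ext u
  rw [← ENNReal.ofReal_mul (abs_nonneg _), abs_of_pos (Real.exp_pos u), Real.log_exp]
  congr 1
  have : Real.exp u * (Real.exp u)⁻¹ = 1 := mul_inv_cancel₀ (Real.exp_pos u).ne'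
  linear_combination Real.exp (-((c - u) / β) ^ 2 / 4) * this

lemma outer_int : ∫⁻ β in Ioi (0:ℝ), ENNReal.ofReal (gB β * β) < ⊤ := by
  have hi : IntegrableOn (fun β => gB β * β) (Ioi (0:ℝ)) := by
    rw [← Ioc_union_Ioi_eq_Ioi (zero_le_one (α := ℝ))]
    refine IntegrableOn.union ?_ ?_
    · refine (integrableOn_const (C := (1:ℝ)) (by simp)).congr_fun (fun β hβ => ?_) measurableSet_Ioc
      simp only [gB, if_pos hβ.2]
      rw [inv_mul_cancel₀ hβ.1.ne']
    · refine (integrableOn_Ioi_rpow_of_lt (a := -2) (by norm_num) zero_lt_one).congr_fun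
        (fun β hβ => ?_) measurableSet_Ioi
      have h1 : (1:ℝ) < β := hβ
      have h0 : 0 < β := by linarith
      simp only [gB, if_neg (not_le.2 h1)]
      rw [Real.rpow_neg h0.le]
      norm_cast
      field_simp
  exact hi.lintegral_lt_top

/-- If the data are not perfectly separated (for Lebesgue-a.e. `α > 0` the vector
`N(α)` with `Nᵢ(α) = zᵢ·1_{aᵢ<α} + (1-zᵢ)·1_{aᵢ>α}` is nonzero), then the Jeffreys
posterior is proper: `∫_{(0,∞)²} ℓ_k(z|a,(α,β))·J((α,β)) dα dβ < +∞`. -/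
theorem stmt16 (μ σ : ℝ) (hσ : 0 < σ) (k : ℕ) (hk : 1 ≤ k)
    (a : Fin k → ℝ) (ha : ∀ i, 0 < a i)
    (z : Fin k → ℕ) (hz : ∀ i, z i = 0 ∨ z i = 1)
    (hnosep : ∀ᵐ α ∂(volume.restrict (Set.Ioi (0 : ℝ))),
      ∃ i, (if a i < α then z i else if α < a i then 1 - z i else 0) ≠ 0) :
    ∫⁻ θ in Set.Ioi (0 : ℝ) ×ˢ Set.Ioi (0 : ℝ),
      ENNReal.ofReal (lik k a z θ.1 θ.2 * Jeff μ σ θ.1 θ.2) < ⊤ := by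
  obtain ⟨i0, i1, h0, h1, hle⟩ := pair_exists k a ha z hz hnosep
  obtain ⟨C, hC, hJ⟩ := Jeff_bound μ σ hσ
  obtain ⟨K, hK, hV⟩ := V_upper
  set c := Real.log (a i0) with hc
  have hgm : Measurable gB := by
    unfold gB
    exact Measurable.ite measurableSet_Iic (by fun_prop) (by fun_prop)
  let G : ℝ × ℝ → ENNReal := fun θ => ENNReal.ofReal (K * C * gB θ.2) *
    ENNReal.ofReal (Real.exp (-((c - Real.log θ.1) / θ.2) ^ 2 / 4) * θ.1⁻¹)
  have hG : Measurable G := by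
    simp only [G]
    fun_prop
  have hgB : ∀ β : ℝ, 0 < β → 0 ≤ gB β := by
    intro β hβ; unfold gB; split_ifs <;> positivity
  calc _ ≤ ∫⁻ θ in Set.Ioi (0 : ℝ) ×ˢ Set.Ioi (0 : ℝ), G θ := by
        refine setLIntegral_mono hG ?_
        rintro ⟨α, β⟩ ⟨hα, hβ⟩
        have hα : 0 < α := hα
        have hβ : 0 < β := hβ
        have hg := hgB β hβ
        simp only [G]
        rw [← ENNReal.ofReal_mul (by positivity)]
        apply ENNReal.ofReal_le_ofReal
        obtain ⟨l0, l1⟩ := lik_bound k a ha z i0 i1 h0 h1 hle hα hβ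
        have l2 := l1.trans (hV _)
        rw [Real.log_div (ha i0).ne' hα.ne', ← hc] at l2
        calc _ ≤ (K * Real.exp (-((c - Real.log α) / β) ^ 2 / 4)) * (C * gB β * α⁻¹) :=
              mul_le_mul l2 (hJ α β hα hβ) (Real.sqrt_nonneg _) (by positivity)
          _ = _ := by ring
    _ = ∫⁻ β in Ioi (0:ℝ), ∫⁻ α in Ioi (0:ℝ), G (α, β) := by
        rw [Measure.volume_eq_prod, ← Measure.prod_restrict, lintegral_prod_symm _ hG.aemeasurable]
    _ = ∫⁻ β in Ioi (0:ℝ), ENNReal.ofReal (K * C * Real.sqrt (4 * π)) *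
          ENNReal.ofReal (gB β * β) := by
        refine setLIntegral_congr_fun measurableSet_Ioi fun β hβ => ?_
        have hβ : 0 < β := hβ
        have hg := hgB β hβ
        simp only [G]
        rw [lintegral_const_mul' _ _ ENNReal.ofReal_ne_top, inner_int c hβ,
          ← ENNReal.ofReal_mul (by positivity), ← ENNReal.ofReal_mul (by positivity)]
        congr 1; ring
    _ < ⊤ := by
        rw [lintegral_const_mul' _ _ ENNReal.ofReal_ne_top]
        exact ENNReal.mul_lt_top ENNReal.ofReal_lt_top outer_int
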